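/- arXiv:1201.2715 — 4 statements merged into one kernel-verified Lean document; each statement's English description precedes it below -/
import Mathlib

section
/- Let G be a graph on n vertices with maximum degree Δ and let γ > 1. For every node w and every round t ≥ 1, Σ_{u∈V} (P^t_{w,u} − 1/n)² ≤ Σ_{u∈V} (P^{t−1}_{w,u} − 1/n)² − ((2 − 2/γ)/(γΔ)) · Σ_{[u:v]∈E} (P^{t−1}_{w,u} − P^{t−1}_{w,v})². -/
namespace LB


/-- The diffusion matrix `P = P(γ)` of a graph `G` with maximum degree `Δ`:
`P_{u,v} = 1/(γΔ)` if `{u,v} ∈ E`, `P_{u,u} = 1 - deg(u)/(γΔ)`, and `0` otherwise. -/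
noncomputable def diffMatrix {n : ℕ} (G : SimpleGraph (Fin n)) [DecidableRel G.Adj]
    (γ : ℝ) : Matrix (Fin n) (Fin n) ℝ :=
  Matrix.of fun u v =>
    if G.Adj u v then 1 / (γ * G.maxDegree)
    else if u = v then 1 - (G.degree u : ℝ) / (γ * G.maxDegree)
    else 0

/-- Sum of `g u v` over the edges `[u:v] ∈ E` (i.e. `{u,v} ∈ E` with `u < v`). -/
noncomputable def edgeSum {n : ℕ} (G : SimpleGraph (Fin n)) [DecidableRel G.Adj]
    (g : Fin n → Fin n → ℝ) : ℝ :=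
  ∑ u : Fin n, ∑ v : Fin n, if u < v ∧ G.Adj u v then g u v else 0

/-- The local 2-divergence `Ψ₂(P)` of the diffusion matrix. -/
noncomputable def psi2Diff {n : ℕ} (G : SimpleGraph (Fin n)) [DecidableRel G.Adj]
    (γ : ℝ) : ℝ :=
  ⨆ w : Fin n, Real.sqrt (⨆ T : ℕ, ∑ t ∈ Finset.range (T + 1),
    edgeSum G fun u v => ((diffMatrix G γ ^ t) w u - (diffMatrix G γ ^ t) w v) ^ 2)

/-- Supremum of `g v` over the neighbors `v` of `u` (zero if `u` is isolated). -/
noncomputable def nbrSup {n : ℕ} (G : SimpleGraph (Fin n)) (u : Fin n)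
    (g : Fin n → ℝ) : ℝ :=
  ⨆ v : G.neighborSet u, g v

/-- The refined local 2-divergence `Υ₂(P)` of the diffusion matrix. -/
noncomputable def ups2Diff {n : ℕ} (G : SimpleGraph (Fin n)) [DecidableRel G.Adj]
    (γ : ℝ) : ℝ :=
  ⨆ w : Fin n, Real.sqrt (⨆ T : ℕ, ∑ t ∈ Finset.range (T + 1),
    (1 / 2) * ∑ u : Fin n,
      nbrSup G u fun v => ((diffMatrix G γ ^ t) w u - (diffMatrix G γ ^ t) w v) ^ 2)

open Classical in
/-- Randomly rounded flow along the edge `[u:v]` (`u < v`): the continuous flow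
`f = (x_v - x_u)/(γΔ)` from `v` to `u` is rounded up iff the uniform sample
`r u v ∈ [0,1]` is below the fractional part of `f` (so `⌈f⌉` has probability
`f - ⌊f⌋`, and an integral flow is never altered). -/
noncomputable def diffFlow {n : ℕ} (G : SimpleGraph (Fin n)) [DecidableRel G.Adj]
    (γ : ℝ) (r : Fin n → Fin n → ℝ) (x : Fin n → ℤ) (u v : Fin n) : ℤ :=
  if r u v < Int.fract (((x v : ℝ) - (x u : ℝ)) / (γ * G.maxDegree))
  then ⌈((x v : ℝ) - (x u : ℝ)) / (γ * G.maxDegree)⌉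
  else ⌊((x v : ℝ) - (x u : ℝ)) / (γ * G.maxDegree)⌋

/-- One round of the edge-based discrete diffusion protocol. -/
noncomputable def diffStep {n : ℕ} (G : SimpleGraph (Fin n)) [DecidableRel G.Adj]
    (γ : ℝ) (r : Fin n → Fin n → ℝ) (x : Fin n → ℤ) : Fin n → ℤ := fun u =>
  x u + ∑ v : Fin n,
    if G.Adj u v then (if u < v then diffFlow G γ r x u v else -diffFlow G γ r x v u)
    else 0

/-- The edge-based discrete diffusion process: round `t ≥ 1` uses the uniform
samples `R t : Fin n → Fin n → ℝ` (read at pairs `(u,v)` with `u < v`). -/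
noncomputable def diffLoads {n : ℕ} (G : SimpleGraph (Fin n)) [DecidableRel G.Adj]
    (γ : ℝ) (R : ℕ → Fin n → Fin n → ℝ) (x : Fin n → ℤ) : ℕ → Fin n → ℤ
  | 0 => x
  | t + 1 => diffStep G γ (R (t + 1)) (diffLoads G γ R x t)


theorem edgeSum_eq_half {n : ℕ} (G : SimpleGraph (Fin n)) [DecidableRel G.Adj]
    (x : Fin n → ℝ) :
    2 * edgeSum G (fun u v => (x u - x v) ^ 2)
      = ∑ u : Fin n, ∑ v : Fin n, if G.Adj u v then (x u - x v) ^ 2 else 0 := by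
  have h2 : edgeSum G (fun u v => (x u - x v) ^ 2)
      = ∑ u : Fin n, ∑ v : Fin n, if v < u ∧ G.Adj u v then (x u - x v) ^ 2 else 0 := by
    unfold edgeSum
    rw [Finset.sum_comm]
    refine Finset.sum_congr rfl fun u _ => Finset.sum_congr rfl fun v _ => ?_
    simp only [G.adj_comm v u]
    split_ifs
    · ring
    · rfl
  rw [two_mul]
  nth_rewrite 2 [h2]
  unfold edgeSum
  rw [← Finset.sum_add_distrib]
  refine Finset.sum_congr rfl fun u _ => ?_
  rw [← Finset.sum_add_distrib]
  refine Finset.sum_congr rfl fun v _ => ?_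
  by_cases h : G.Adj u v
  · rcases lt_or_gt_of_ne h.ne with h1 | h1
    · simp [h, h1, h1.not_gt]
    · simp [h, h1, h1.not_gt]
  · simp [h]

theorem vecMul_step {n : ℕ} (G : SimpleGraph (Fin n)) [DecidableRel G.Adj]
    (γ : ℝ) (x : Fin n → ℝ) (u : Fin n) :
    ∑ v, x v * diffMatrix G γ v u
      = x u + 1 / (γ * G.maxDegree) * ∑ v, if G.Adj u v then (x v - x u) else 0 := by
  have h1 : ∀ v, x v * diffMatrix G γ v u
      = (if v = u then x v else 0) + 1 / (γ * G.maxDegree) * (if G.Adj u v then x v else 0)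
        - (if v = u then x v * ((G.degree v : ℝ) / (γ * G.maxDegree)) else 0) := by
    intro v
    unfold diffMatrix
    simp only [Matrix.of_apply, G.adj_comm v u]
    by_cases h : G.Adj u v
    · simp [h, h.ne', mul_comm]
    · by_cases h' : v = u
      · subst h'; simp; ring
      · simp [h, h']
  have h2 : ∀ v, (if G.Adj u v then (x v - x u) else 0)
      = (if G.Adj u v then x v else 0) - x u * (if G.Adj u v then 1 else 0) := by
    intro v
    split_ifs <;> ring
  have h3 : (∑ v, if G.Adj u v then (1 : ℝ) else 0) = G.degree u := by
    rw [Finset.sum_boole, ← G.card_neighborFinset_eq_degree, G.neighborFinset_eq_filter]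
  simp only [h1, h2, Finset.sum_sub_distrib, Finset.sum_add_distrib, ← Finset.mul_sum, h3]
  simp only [Finset.sum_ite_eq', Finset.mem_univ, if_true]
  ring

theorem sum_mul_S {n : ℕ} (G : SimpleGraph (Fin n)) [DecidableRel G.Adj]
    (x : Fin n → ℝ) (a : ℝ) :
    ∑ u, (x u - a) * (∑ v, if G.Adj u v then (x v - x u) else 0)
      = - edgeSum G (fun u v => (x u - x v) ^ 2) := by
  have h1 : ∑ u, (x u - a) * (∑ v, if G.Adj u v then (x v - x u) else 0)
      = ∑ u, ∑ v, if G.Adj u v then (x u - a) * (x v - x u) else 0 := by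
    simp only [Finset.mul_sum, mul_ite, mul_zero]
  have h2 : ∑ u, (x u - a) * (∑ v, if G.Adj u v then (x v - x u) else 0)
      = ∑ u, ∑ v, if G.Adj u v then (x v - a) * (x u - x v) else 0 := by
    rw [h1, Finset.sum_comm]
    refine Finset.sum_congr rfl fun u _ => Finset.sum_congr rfl fun v _ => ?_
    simp only [G.adj_comm v u]
  have h3 := edgeSum_eq_half G x
  have h4 : (∑ u, ∑ v, if G.Adj u v then (x u - a) * (x v - x u) else 0)
      + (∑ u, ∑ v, if G.Adj u v then (x v - a) * (x u - x v) else 0)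
      = - ∑ u : Fin n, ∑ v : Fin n, if G.Adj u v then (x u - x v) ^ 2 else 0 := by
    simp only [← Finset.sum_add_distrib, ← Finset.sum_neg_distrib]
    refine Finset.sum_congr rfl fun u _ => Finset.sum_congr rfl fun v _ => ?_
    split_ifs <;> ring
  linarith

theorem sum_sq_S {n : ℕ} (G : SimpleGraph (Fin n)) [DecidableRel G.Adj]
    (x : Fin n → ℝ) :
    ∑ u, (∑ v, if G.Adj u v then (x v - x u) else 0) ^ 2
      ≤ G.maxDegree * (2 * edgeSum G (fun u v => (x u - x v) ^ 2)) := by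
  rw [edgeSum_eq_half, Finset.mul_sum]
  refine Finset.sum_le_sum fun u _ => ?_
  rw [← Finset.sum_filter, ← Finset.sum_filter]
  refine sq_sum_le_card_mul_sum_sq.trans ?_
  have hc : (Finset.univ.filter (fun v => G.Adj u v)).card = G.degree u := by
    rw [← G.card_neighborFinset_eq_degree, G.neighborFinset_eq_filter]
  rw [hc]
  have he : ∑ v with G.Adj u v, (x v - x u) ^ 2 = ∑ v with G.Adj u v, (x u - x v) ^ 2 :=
    Finset.sum_congr rfl fun v _ => by ring
  rw [he]
  refine mul_le_mul_of_nonneg_right ?_ (Finset.sum_nonneg fun _ _ => sq_nonneg _)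
  exact_mod_cast G.degree_le_maxDegree u

/-- One-round drop of the quadratic potential for diffusion:
for γ > 1 and every node `w` and round `t ≥ 1`,
`∑_u (P^t_{w,u} - 1/n)² ≤ ∑_u (P^{t-1}_{w,u} - 1/n)²
  - ((2-2/γ)/(γΔ)) ∑_{[u:v]∈E} (P^{t-1}_{w,u} - P^{t-1}_{w,v})²`. -/
theorem stmt3 {n : ℕ} (hn : 0 < n) (G : SimpleGraph (Fin n)) [DecidableRel G.Adj]
    (hΔ : 0 < G.maxDegree) (γ : ℝ) (hγ : 1 < γ) (w : Fin n) (t : ℕ) (ht : 1 ≤ t) :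
    (∑ u : Fin n, ((diffMatrix G γ ^ t) w u - 1 / n) ^ 2)
      ≤ (∑ u : Fin n, ((diffMatrix G γ ^ (t - 1)) w u - 1 / n) ^ 2)
        - (2 - 2 / γ) / (γ * G.maxDegree) *
            edgeSum G (fun u v =>
              ((diffMatrix G γ ^ (t - 1)) w u - (diffMatrix G γ ^ (t - 1)) w v) ^ 2) := by
  obtain ⟨t, rfl⟩ : ∃ s, t = s + 1 := ⟨t - 1, by omega⟩
  rw [Nat.add_sub_cancel]
  set x : Fin n → ℝ := fun u => (diffMatrix G γ ^ t) w u with hx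
  have hstep : ∀ u, (diffMatrix G γ ^ (t + 1)) w u
      = x u + 1 / (γ * G.maxDegree) * ∑ v, if G.Adj u v then (x v - x u) else 0 := by
    intro u
    rw [pow_succ, Matrix.mul_apply, ← vecMul_step]
  simp only [hstep]
  change _ ≤ (∑ u, (x u - 1 / n) ^ 2) - (2 - 2 / γ) / (γ * G.maxDegree) *
    edgeSum G (fun u v => (x u - x v) ^ 2)
  have hD : (0 : ℝ) < G.maxDegree := by exact_mod_cast hΔ
  have hg : 0 < γ := by linarith
  have h1 := sum_mul_S G x (1 / n)
  have h2 := sum_sq_S G x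
  set c : ℝ := 1 / (γ * G.maxDegree) with hc
  set S : Fin n → ℝ := fun u => ∑ v, if G.Adj u v then (x v - x u) else 0 with hS
  set E := edgeSum G (fun u v => (x u - x v) ^ 2) with hE
  have h3 : ∑ u, (x u + c * S u - 1 / n) ^ 2
      = ∑ u, (x u - 1 / n) ^ 2 + 2 * c * ∑ u, (x u - 1 / n) * S u + c ^ 2 * ∑ u, S u ^ 2 := by
    rw [Finset.mul_sum, Finset.mul_sum, ← Finset.sum_add_distrib, ← Finset.sum_add_distrib]
    exact Finset.sum_congr rfl fun u _ => by ring
  change ∑ u, (x u + c * S u - 1 / n) ^ 2 ≤ _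
  change ∑ u, (x u - 1 / n) * S u = -E at h1
  change ∑ u, S u ^ 2 ≤ _ at h2
  rw [h3, h1]
  have h4 := mul_le_mul_of_nonneg_left h2 (sq_nonneg c)
  have h5 : (2 - 2 / γ) / (γ * G.maxDegree) * E
      = 2 * c * E - c ^ 2 * (G.maxDegree * (2 * E)) := by
    rw [hc]
    field_simp
  rw [h5]
  linarith

end LB
end

section
/- Fix a sequence of matchings 𝓜 = ⟨M^{(1)}, M^{(2)}, …⟩ on a graph with n vertices and run the discrete process with independent uniformly random orientations. For any non-negative integers K, α, t with 1 ≤ α ≤ K: max over y ∈ ℤ^n with disc(y) ≤ K of P( max_u x_u^{(t)} ≥ ⌊ȳ⌋ + α | x^{(0)} = y ) ≤ max over y ∈ ℤ^n with disc(y) ≤ K of P( min_u x_u^{(t)} ≤ ⌊ȳ⌋ − α + 3 | x^{(0)} = y ), where ȳ = Σ_u y_u/n is the average of the starting vector; and symmetrically, max over such y of P( min_u x_u^{(t)} ≤ ⌊ȳ⌋ − α | x^{(0)} = y ) ≤ max over such y of P( max_u x_u^{(t)} ≥ ⌊ȳ⌋ + α − 3 | x^{(0)} = y ). -/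
namespace LB


/-- A matching on the vertex set `Fin n`, encoded as an involution;
`f u = u` means that `u` is unmatched, and `f u = v ≠ u` means `{u,v}`
is an edge of the matching. -/
structure Matching (n : ℕ) where
  f : Fin n → Fin n
  invol : ∀ u, f (f u) = u

/-- The matching matrix of a matching: entries `1/2` at `(u,u)`, `(u,v)`, `(v,u)`, `(v,v)`
for matched pairs `{u,v}`, entry `1` at `(w,w)` for unmatched `w`, and `0` otherwise. -/
noncomputable def Matching.matrix {n : ℕ} (m : Matching n) : Matrix (Fin n) (Fin n) ℝ :=
  Matrix.of fun u v =>
    if m.f u = u then (if v = u then 1 else 0)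
    else if v = u ∨ v = m.f u then (1 : ℝ) / 2 else 0

/-- `M^{[t₁,t₂]} = M^{(t₁)} * ⋯ * M^{(t₂)}` (the identity matrix if `t₁ > t₂`). -/
noncomputable def prodMatrix {n : ℕ} (M : ℕ → Matching n) (t₁ t₂ : ℕ) : Matrix (Fin n) (Fin n) ℝ :=
  ((List.range' t₁ (t₂ + 1 - t₁)).map fun s => (M s).matrix).prod

/-- Sum of `g u v` over the matched pairs `[u:v]` (i.e. `{u,v}` in the matching with `u < v`). -/
noncomputable def pairSum {n : ℕ} (m : Matching n) (g : Fin n → Fin n → ℝ) : ℝ :=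
  ∑ u : Fin n, if u < m.f u then g u (m.f u) else 0

/-- The discrepancy `max_{u,v} |x_u - x_v|` of a load vector. -/
noncomputable def disc {n : ℕ} (x : Fin n → ℝ) : ℝ :=
  ⨆ u : Fin n, ⨆ v : Fin n, |x u - x v|

/-- Discrepancy of an integer load vector. -/
noncomputable def discZ {n : ℕ} (x : Fin n → ℤ) : ℝ := disc fun u => (x u : ℝ)

/-- The time interval `[t₁,t₂]` (with its matchings) is `(K,ε)`-smoothing. -/
def IsSmoothing {n : ℕ} (M : ℕ → Matching n) (t₁ t₂ : ℕ) (K ε : ℝ) : Prop :=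
  ∀ ξ : Fin n → ℝ, disc ξ ≤ K → disc (Matrix.vecMul ξ (prodMatrix M (t₁ + 1) t₂)) ≤ ε

/-- `τ_cont(K,ε)`: the minimum `t` such that `[0,t]` is `(K,ε)`-smoothing. -/
noncomputable def tauCont {n : ℕ} (M : ℕ → Matching n) (K ε : ℝ) : ℕ :=
  sInf {t : ℕ | IsSmoothing M 0 t K ε}

/-- One round of the discrete process: two matched nodes split their total load,
the node indicated by the orientation bit (stored at the pair `(min,max)`) receiving
the excess token; `φ u v = true` for `u < v` means the excess token goes to `u`. -/
def step {n : ℕ} (m : Matching n) (φ : Fin n → Fin n → Bool) (x : Fin n → ℤ) :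
    Fin n → ℤ := fun u =>
  if m.f u = u then x u
  else if u < m.f u then
    (if φ u (m.f u) then Int.ediv (x u + x (m.f u) + 1) 2
     else Int.ediv (x u + x (m.f u)) 2)
  else
    (if φ (m.f u) u then Int.ediv (x u + x (m.f u)) 2
     else Int.ediv (x u + x (m.f u) + 1) 2)

/-- The discrete process started at round `t₁` from load vector `x`:
`loadsFrom M t₁ Φ x r` is the load vector `r` rounds later; the `(r+1)`-st
step uses the matching `M (t₁+r+1)` and the orientations `Φ (r+1)`. -/
def loadsFrom {n : ℕ} (M : ℕ → Matching n) (t₁ : ℕ) (Φ : ℕ → Fin n → Fin n → Bool)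
    (x : Fin n → ℤ) : ℕ → Fin n → ℤ
  | 0 => x
  | r + 1 => step (M (t₁ + r + 1)) (Φ (r + 1)) (loadsFrom M t₁ Φ x r)

/-- The discrete process started at round `0`; round `t ≥ 1` uses matching `M t`. -/
def loads {n : ℕ} (M : ℕ → Matching n) (Φ : ℕ → Fin n → Fin n → Bool)
    (x : Fin n → ℤ) : ℕ → Fin n → ℤ := loadsFrom M 0 Φ x

/-- Extend a finite family of random choices (one for each of the rounds `1,…,T`)
to all rounds: round `s` reads index `s-1`. -/
def lift {A : Type*} (a₀ : A) {T : ℕ} (ω : Fin T → A) : ℕ → A := fun s =>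
  if h : s - 1 < T then ω ⟨s - 1, h⟩ else a₀

/-- Default (irrelevant) orientation. -/
def orientDefault (n : ℕ) : Fin n → Fin n → Bool := fun _ _ => true

/-- Probability of an event under the uniform distribution on a finite sample space;
this makes all the per-round random choices independent and uniform. -/
noncomputable def pr {Ω : Type*} [Fintype Ω] (A : Ω → Prop) : ℝ :=
  haveI := Classical.decPred A
  ((Finset.univ.filter A).card : ℝ) / (Fintype.card Ω : ℝ)

/-- Expectation under the uniform distribution on a finite sample space. -/
noncomputable def ex {Ω : Type*} [Fintype Ω] (Z : Ω → ℝ) : ℝ :=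
  (∑ ω : Ω, Z ω) / (Fintype.card Ω : ℝ)

/-- `λ(M) = max{|λ₂(M)|, |λ_n(M)|}` for a symmetric doubly stochastic matrix `M`,
characterized as the operator norm of `M` on the subspace orthogonal to `𝟙`. -/
noncomputable def lamMax {n : ℕ} (M : Matrix (Fin n) (Fin n) ℝ) : ℝ :=
  ⨆ x : {x : Fin n → ℝ // (∑ u, x u) = 0 ∧ (∑ u, (x u) ^ 2) = 1},
    Real.sqrt (∑ u, (M.mulVec x.1 u) ^ 2)

/-- The round matrix `M = M^{(1)} ⋯ M^{(d)}` of the balancing circuit. -/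
noncomputable def roundMatrix {n d : ℕ} (Ms : Fin d → Matching n) : Matrix (Fin n) (Fin n) ℝ :=
  (List.ofFn fun i => (Ms i).matrix).prod

/-- The periodic sequence of matchings of the balancing circuit:
round `t` uses `M^{(((t-1) mod d)+1)}`. -/
def circuit {n d : ℕ} (hd : 0 < d) (Ms : Fin d → Matching n) : ℕ → Matching n :=
  fun t => Ms ⟨(t - 1) % d, Nat.mod_lt _ hd⟩


theorem step_flip {n : ℕ} (m : Matching n) (φ ψ : Fin n → Fin n → Bool) (x : Fin n → ℤ)
    (h : ∀ u v, ψ u v = !φ u v) (u : Fin n) :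
    step m ψ (fun v => -x v) u = -step m φ x u := by
  have key : ∀ a b : ℤ, Int.ediv a b = a / b := fun _ _ => rfl
  simp only [step, h, key]
  by_cases h1 : m.f u = u
  · simp [h1]
  · by_cases h2 : u < m.f u
    · cases h3 : φ u (m.f u) <;> simp [h1, h2] <;> omega
    · cases h3 : φ (m.f u) u <;> simp [h1, h2] <;> omega

theorem loads_flip {n : ℕ} (M : ℕ → Matching n) {t : ℕ} (ω : Fin t → Fin n → Fin n → Bool)
    (x : Fin n → ℤ) (r : ℕ) (hr : r ≤ t) :
    loads M (lift (orientDefault n) (fun s u v => !ω s u v)) (fun v => -x v) r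
      = fun u => -loads M (lift (orientDefault n) ω) x r u := by
  induction r with
  | zero => rfl
  | succ r ih =>
    have ih' := ih (by omega)
    unfold loads at ih' ⊢
    simp only [loadsFrom]
    rw [ih']
    funext u
    apply step_flip
    intro u v
    have : r + 1 - 1 < t := by omega
    simp [lift, show r < t by omega]

theorem pr_le_one {Ω : Type*} [Fintype Ω] (A : Ω → Prop) : pr A ≤ 1 := by
  classical
  unfold pr
  apply div_le_one_of_le₀
  · exact_mod_cast Finset.card_le_univ _
  · positivity

theorem pr_le_pr {Ω : Type*} [Fintype Ω] (A B : Ω → Prop) (e : Ω → Ω)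
    (he : Function.Injective e) (h : ∀ ω, A ω → B (e ω)) : pr A ≤ pr B := by
  classical
  unfold pr
  apply div_le_div_of_nonneg_right _ (by positivity)
  norm_cast
  apply Finset.card_le_card_of_injOn e
  · intro ω hω
    simp at hω ⊢
    exact h ω hω
  · exact he.injOn

theorem flip_inj {n t : ℕ} : Function.Injective
    (fun (ω : Fin t → Fin n → Fin n → Bool) s u v => !ω s u v) := by
  intro a b h
  funext s u v
  have := congrFun (congrFun (congrFun h s) u) v
  simpa using this

theorem discZ_neg {n : ℕ} (y : Fin n → ℤ) : discZ (fun v => -y v) = discZ y := by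
  unfold discZ disc
  congr 1; funext u; congr 1; funext v
  push_cast
  rw [← abs_neg]; congr 1; ring

theorem ediv_neg_bounds (a n : ℤ) (hn : 0 < n) :
    -(a / n) - 1 ≤ (-a) / n ∧ (-a) / n ≤ -(a / n) := by
  have h1 := Int.emod_add_mul_ediv a n
  have h2 := Int.emod_nonneg a hn.ne'
  have h3 := Int.emod_lt_of_pos a hn
  constructor
  · rw [Int.le_ediv_iff_mul_le hn]; nlinarith
  · rw [← Int.lt_add_one_iff, Int.ediv_lt_iff_lt_mul hn]; nlinarith

/-- Symmetry between upper-bounding the maximum load and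
lower-bounding the minimum load for the discrete process with independent uniformly
random orientations.  Here `⌊ȳ⌋ = (∑_u y_u) ediv n`. -/
theorem stmt7 {n : ℕ} (hn : 0 < n) (M : ℕ → Matching n) (K α t : ℕ)
    (hα : 1 ≤ α) (hK : α ≤ K) :
    ((⨆ y : {y : Fin n → ℤ // discZ y ≤ K},
        pr fun ω : Fin t → Fin n → Fin n → Bool =>
          ∃ u : Fin n, Int.ediv (∑ v, y.1 v) n + (α : ℤ) ≤
            loads M (lift (orientDefault n) ω) y.1 t u)
      ≤ ⨆ y : {y : Fin n → ℤ // discZ y ≤ K},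
        pr fun ω : Fin t → Fin n → Fin n → Bool =>
          ∃ u : Fin n, loads M (lift (orientDefault n) ω) y.1 t u ≤
            Int.ediv (∑ v, y.1 v) n - (α : ℤ) + 3) ∧
    ((⨆ y : {y : Fin n → ℤ // discZ y ≤ K},
        pr fun ω : Fin t → Fin n → Fin n → Bool =>
          ∃ u : Fin n, loads M (lift (orientDefault n) ω) y.1 t u ≤
            Int.ediv (∑ v, y.1 v) n - (α : ℤ))
      ≤ ⨆ y : {y : Fin n → ℤ // discZ y ≤ K},
        pr fun ω : Fin t → Fin n → Fin n → Bool =>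
          ∃ u : Fin n, Int.ediv (∑ v, y.1 v) n + (α : ℤ) - 3 ≤
            loads M (lift (orientDefault n) ω) y.1 t u) := by
  have hn' : (0 : ℤ) < n := by exact_mod_cast hn
  haveI : Nonempty {y : Fin n → ℤ // discZ y ≤ K} := ⟨⟨fun _ => 0, by simp [discZ, disc]⟩⟩
  constructor
  · apply ciSup_le
    intro y
    refine le_trans ?_ (le_ciSup ⟨1, ?_⟩ ⟨fun v => -y.1 v, (discZ_neg y.1).trans_le y.2⟩)
    · refine pr_le_pr _ _ _ flip_inj ?_
      rintro ω ⟨u, hu⟩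
      refine ⟨u, ?_⟩
      rw [loads_flip M ω y.1 t le_rfl]
      have hb := ediv_neg_bounds (∑ v, y.1 v) n hn'
      change (∑ v, y.1 v) / (n : ℤ) + (α : ℤ) ≤ _ at hu
      change _ ≤ (∑ v, -y.1 v) / (n : ℤ) - (α : ℤ) + 3
      rw [Finset.sum_neg_distrib]
      dsimp only
      linarith [hb.1]
    · rintro _ ⟨z, rfl⟩
      exact pr_le_one _
  · apply ciSup_le
    intro y
    refine le_trans ?_ (le_ciSup ⟨1, ?_⟩ ⟨fun v => -y.1 v, (discZ_neg y.1).trans_le y.2⟩)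
    · refine pr_le_pr _ _ _ flip_inj ?_
      rintro ω ⟨u, hu⟩
      refine ⟨u, ?_⟩
      rw [loads_flip M ω y.1 t le_rfl]
      have hb := ediv_neg_bounds (∑ v, y.1 v) n hn'
      change _ ≤ (∑ v, y.1 v) / (n : ℤ) - (α : ℤ) at hu
      change (∑ v, -y.1 v) / (n : ℤ) + (α : ℤ) - 3 ≤ _
      rw [Finset.sum_neg_distrib]
      dsimp only
      linarith [hb.2]
    · rintro _ ⟨z, rfl⟩
      exact pr_le_one _

end LB
end

section
/- Let G be any graph on n ≥ 2 vertices and 𝓜 = ⟨M^{(1)}, M^{(2)}, …⟩ any sequence of matchings. Run the discrete process with independent uniformly random orientations from x^{(0)} ∈ ℤ^n and the continuous process from ξ^{(0)} = x^{(0)}. Then for any round t and any δ ≥ 1, P( max_{w∈V} |x_w^{(t)} − ξ_w^{(t)}| ≥ √(4δ·log n) ) ≤ 2·n^{−δ+1}, where log denotes the natural logarithm. -/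
namespace LB


open Finset

/-- averaging -/
noncomputable def avg {n : ℕ} (m : Matching n) (y : Fin n → ℝ) : Fin n → ℝ :=
  fun u => (y u + y (m.f u)) / 2

theorem mulVec_avg {n : ℕ} (m : Matching n) (y : Fin n → ℝ) :
    Matrix.vecMul y m.matrix = avg m y := by
  funext v
  have key : ∀ u, y u * m.matrix u v
      = (if v = u then y u / 2 else 0) + (if m.f v = u then y u / 2 else 0) := by
    intro u
    have h1 : m.f v = u ↔ v = m.f u := by
      constructor
      · rintro rfl; rw [m.invol]
      · rintro rfl; rw [m.invol]
    rw [Matching.matrix, Matrix.of_apply]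
    by_cases h : m.f u = u
    · simp only [h1, h]
      split_ifs <;> simp
    · simp only [h1, h, if_false]
      by_cases h2 : v = u
      · have : ¬ v = m.f u := by rw [h2]; exact fun h' => h h'.symm
        simp only [h2, true_or, if_true]
        rw [h2] at this
        simp [this]; ring
      · by_cases h3 : v = m.f u
        · simp [h3, h]; ring
        · simp [h2, h3]
  simp only [Matrix.vecMul, dotProduct, avg]
  rw [Finset.sum_congr rfl (fun u _ => key u), Finset.sum_add_distrib]
  simp
  ring

theorem sum_invol {n : ℕ} (m : Matching n) (h : Fin n → ℝ) :
    ∑ u, h (m.f u) = ∑ u, h u :=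
  Equiv.sum_comp (Function.Involutive.toPerm m.f m.invol) h

theorem sum_avg {n : ℕ} (m : Matching n) (z y : Fin n → ℝ) :
    ∑ u, avg m z u * y u = ∑ u, z u * avg m y u := by
  have h1 := sum_invol m (fun u => z u * y (m.f u))
  simp only [m.invol] at h1
  simp only [avg]
  have e1 : ∀ u, (z u + z (m.f u)) / 2 * y u = z u * y u / 2 + z (m.f u) * y u / 2 := by
    intro u; ring
  have e2 : ∀ u, z u * ((y u + y (m.f u)) / 2) = z u * y u / 2 + z u * y (m.f u) / 2 := by
    intro u; ring
  simp only [e1, e2, Finset.sum_add_distrib, ← Finset.sum_div, h1]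

theorem sum_pairs {n : ℕ} (m : Matching n) (h : Fin n → ℝ)
    (h0 : ∀ u, m.f u = u → h u = 0) :
    ∑ u, h u = ∑ u, if u < m.f u then h u + h (m.f u) else 0 := by
  have h1 := sum_invol m (fun u => if m.f u < u then h u else 0)
  simp only [m.invol] at h1
  have e1 : ∀ u, h u = (if u < m.f u then h u else 0) + (if m.f u < u then h u else 0) := by
    intro u
    rcases lt_trichotomy u (m.f u) with hh | hh | hh
    · simp [hh, not_lt.mpr hh.le]
    · simp [← hh, h0 u hh.symm]
    · simp [hh, not_lt.mpr hh.le]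
  have e2 : ∀ u, (if u < m.f u then h u + h (m.f u) else 0)
      = (if u < m.f u then h u else 0) + (if u < m.f u then h (m.f u) else 0) := by
    intro u; split_ifs <;> simp
  rw [Finset.sum_congr rfl (fun u _ => e1 u), Finset.sum_congr rfl (fun u _ => e2 u),
    Finset.sum_add_distrib, Finset.sum_add_distrib, h1]

/-- half the (odd) excess -/
noncomputable def odd2 (k : ℤ) : ℝ := (((k + 1) / 2 : ℤ) : ℝ) - (k : ℝ) / 2

theorem odd2_cases (k : ℤ) : (odd2 k = 0 ∨ odd2 k = 1 / 2) ∧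
    ((k / 2 : ℤ) : ℝ) - (k : ℝ) / 2 = - odd2 k := by
  unfold odd2
  rcases Int.even_or_odd' k with ⟨c, rfl | rfl⟩
  · have h1 : (2 * c + 1) / 2 = c := by omega
    have h2 : (2 * c) / 2 = c := by omega
    rw [h1, h2]; push_cast
    constructor
    · left; ring
    · ring
  · have h1 : (2 * c + 1 + 1) / 2 = c + 1 := by omega
    have h2 : (2 * c + 1) / 2 = c := by omega
    rw [h1, h2]; push_cast
    constructor
    · right; ring
    · ring

/-- sign of a bit -/
def sg (b : Bool) : ℝ := if b then 1 else -1

theorem step_inner {n : ℕ} (m : Matching n) (a : Fin n → Fin n → Bool) (z : Fin n → ℤ)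
    (y : Fin n → ℝ) :
    ∑ u, ((step m a z u : ℝ) - avg m (fun u => (z u : ℝ)) u) * y u
      = ∑ u, if u < m.f u then
          sg (a u (m.f u)) * (odd2 (z u + z (m.f u)) * (y u - y (m.f u))) else 0 := by
  rw [sum_pairs m]
  · apply Finset.sum_congr rfl
    intro u _
    split_ifs with hu
    · have hne : m.f u ≠ u := hu.ne'
      have hne' : u ≠ m.f u := hu.ne
      have hnl : ¬ m.f u < u := not_lt.mpr hu.le
      have hd : ∀ k : ℤ, Int.ediv k 2 = k / 2 := fun _ => rfl
      have hk := (odd2_cases (z u + z (m.f u))).2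
      have hk' : odd2 (z u + z (m.f u)) = _ := rfl
      conv_rhs at hk' => unfold odd2
      have hc : z (m.f u) + z u = z u + z (m.f u) := add_comm _ _
      simp only [step, avg, m.invol, hne, hne', hu, hnl, if_true, if_false, hd, hc]
      push_cast at hk hk'
      cases a u (m.f u)
      · simp only [sg, Bool.false_eq_true, if_false]
        linear_combination (y u) * hk - (y (m.f u)) * hk'
      · simp only [sg, if_true]
        linear_combination (-y u) * hk' + (y (m.f u)) * hk
    · rfl
  · intro u hu
    simp [step, avg, hu]

theorem sum_bit {n : ℕ} (v : Fin n) (c : ℝ) :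
    ∑ b : Fin n → Bool, Real.exp (sg (b v) * c)
      ≤ Fintype.card (Fin n → Bool) * Real.exp (c ^ 2 / 2) := by
  have hflip : ∑ b : Fin n → Bool, Real.exp (sg (b v) * c)
      = ∑ b : Fin n → Bool, Real.exp (sg (!(b v)) * c) := by
    let e : (Fin n → Bool) ≃ (Fin n → Bool) :=
      Function.Involutive.toPerm (fun b i => !(b i)) (fun b => by funext i; simp)
    exact (Equiv.sum_comp e (fun b => Real.exp (sg (b v) * c))).symm
  have h2 : ∑ b : Fin n → Bool, Real.exp (sg (b v) * c)
      = ∑ b : Fin n → Bool, Real.cosh c := by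
    have h3 : ∑ b : Fin n → Bool, Real.exp (sg (b v) * c)
        + ∑ b : Fin n → Bool, Real.exp (sg (!(b v)) * c)
        = ∑ b : Fin n → Bool, 2 * Real.cosh c := by
      rw [← Finset.sum_add_distrib]
      apply Finset.sum_congr rfl
      intro b _
      rw [Real.cosh_eq]
      cases b v <;> simp [sg] <;> ring
    rw [← hflip, ← Finset.mul_sum] at h3
    linarith
  rw [h2]
  simp only [Finset.sum_const, Finset.card_univ, nsmul_eq_mul]
  exact mul_le_mul_of_nonneg_left (Real.cosh_le_exp_half_sq c) (Nat.cast_nonneg _)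

theorem one_step {n : ℕ} (m : Matching n) (z : Fin n → ℤ) (y : Fin n → ℝ) :
    ∑ a : Fin n → Fin n → Bool,
      Real.exp (∑ u, ((step m a z u : ℝ) - avg m (fun u => (z u : ℝ)) u) * y u)
    ≤ Fintype.card (Fin n → Fin n → Bool) *
      Real.exp ((∑ u, y u ^ 2 - ∑ u, avg m y u ^ 2) / 4) := by
  simp only [step_inner, Real.exp_sum]
  have hf := Finset.prod_univ_sum (fun _ : Fin n => (Finset.univ : Finset (Fin n → Bool)))
    (fun u b => Real.exp (if u < m.f u then
          sg (b (m.f u)) * (odd2 (z u + z (m.f u)) * (y u - y (m.f u))) else 0))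
  rw [Fintype.piFinset_univ] at hf
  rw [← hf]
  have hb : ∀ u, ∑ b : Fin n → Bool, Real.exp (if u < m.f u then
          sg (b (m.f u)) * (odd2 (z u + z (m.f u)) * (y u - y (m.f u))) else 0)
      ≤ Fintype.card (Fin n → Bool) * Real.exp (if u < m.f u then
          (y u - y (m.f u)) ^ 2 / 8 else 0) := by
    intro u
    split_ifs
    · refine (sum_bit _ _).trans ?_
      refine mul_le_mul_of_nonneg_left (Real.exp_le_exp.mpr ?_) (Nat.cast_nonneg _)
      rcases (odd2_cases (z u + z (m.f u))).1 with h | h <;> rw [h]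
      · nlinarith [sq_nonneg (y u - y (m.f u))]
      · apply le_of_eq; ring
    · simp
  refine (Finset.prod_le_prod (fun u _ => Finset.sum_nonneg fun b _ => (Real.exp_pos _).le)
    (fun u _ => hb u)).trans (le_of_eq ?_)
  rw [Finset.prod_mul_distrib, ← Real.exp_sum]
  congr 1
  · simp
  · congr 1
    have e := sum_pairs m (fun u => (y u ^ 2 - avg m y u ^ 2) / 4) (by
      intro u hu; simp [avg, hu])
    rw [← Finset.sum_sub_distrib, Finset.sum_div, e]
    apply Finset.sum_congr rfl
    intro u _
    split_ifs
    · simp only [avg, m.invol]; ring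
    · rfl

theorem prodMatrix_succ {n : ℕ} (M : ℕ → Matching n) (t : ℕ) :
    prodMatrix M 1 (t + 1) = prodMatrix M 1 t * (M (t + 1)).matrix := by
  unfold prodMatrix
  simp only [Nat.add_sub_cancel]
  rw [List.range'_concat]
  simp [add_comm]

theorem loadsFrom_congr {n : ℕ} (M : ℕ → Matching n) (s : ℕ) (Φ Ψ : ℕ → Fin n → Fin n → Bool)
    (x : Fin n → ℤ) (r : ℕ) (h : ∀ i, 1 ≤ i → i ≤ r → Φ i = Ψ i) :
    loadsFrom M s Φ x r = loadsFrom M s Ψ x r := by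
  induction r with
  | zero => rfl
  | succ r ih =>
    simp only [loadsFrom]
    rw [ih (fun i h1 h2 => h i h1 (by omega)), h (r + 1) (by omega) le_rfl]

theorem loads_snoc {n t : ℕ} (M : ℕ → Matching n) (x : Fin n → ℤ) (a₀ : Fin n → Fin n → Bool)
    (ω : Fin t → Fin n → Fin n → Bool) (a : Fin n → Fin n → Bool) :
    loads M (lift a₀ (Fin.snoc ω a : Fin (t + 1) → Fin n → Fin n → Bool)) x (t + 1)
      = step (M (t + 1)) a (loads M (lift a₀ ω) x t) := by
  simp only [loads, loadsFrom]
  rw [loadsFrom_congr M 0 (lift a₀ (Fin.snoc ω a : Fin (t + 1) → Fin n → Fin n → Bool))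
    (lift a₀ ω) x t]
  · congr 1
    · simp
    · simp [lift, Fin.snoc]
  · intro i h1 h2
    have h3 : i - 1 < t := by omega
    have h4 : i - 1 < t + 1 := by omega
    simp [lift, Fin.snoc, h3, h4]

theorem mgf {n : ℕ} (M : ℕ → Matching n) (x : Fin n → ℤ) (a₀ : Fin n → Fin n → Bool)
    (t : ℕ) : ∀ (y : Fin n → ℝ),
    ∑ ω : Fin t → Fin n → Fin n → Bool,
      Real.exp (∑ u, ((loads M (lift a₀ ω) x t u : ℝ) -
            Matrix.vecMul (fun u => (x u : ℝ)) (prodMatrix M 1 t) u) * y u)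
    ≤ Fintype.card (Fin t → Fin n → Fin n → Bool) * Real.exp ((∑ u, y u ^ 2) / 4) := by
  induction t with
  | zero =>
    intro y
    have : ∀ u, Matrix.vecMul (fun u => (x u : ℝ)) (prodMatrix M 1 0) u = x u := by
      intro u; simp [prodMatrix]
    simp only [this, loads, loadsFrom]
    simp
    positivity
  | succ t ih =>
    intro y
    rw [← Equiv.sum_comp (Fin.snocEquiv (fun _ : Fin (t + 1) => Fin n → Fin n → Bool)),
      Fintype.sum_prod_type_right]
    set m := M (t + 1)
    set B := Fintype.card (Fin n → Fin n → Bool) with hB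
    have key : ∀ ω : Fin t → Fin n → Fin n → Bool,
        ∑ a : Fin n → Fin n → Bool, Real.exp (∑ u,
          ((loads M (lift a₀ (Fin.snoc ω a : Fin (t + 1) → Fin n → Fin n → Bool)) x (t + 1) u : ℝ) -
            Matrix.vecMul (fun u => (x u : ℝ)) (prodMatrix M 1 (t + 1)) u) * y u)
        ≤ Real.exp (∑ u, ((loads M (lift a₀ ω) x t u : ℝ) -
            Matrix.vecMul (fun u => (x u : ℝ)) (prodMatrix M 1 t) u) * avg m y u) *
          (B * Real.exp ((∑ u, y u ^ 2 - ∑ u, avg m y u ^ 2) / 4)) := by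
      intro ω
      refine le_trans (le_of_eq ?_) (mul_le_mul_of_nonneg_left
        (one_step m (loads M (lift a₀ ω) x t) y) (Real.exp_pos _).le)
      rw [Finset.mul_sum]
      apply Finset.sum_congr rfl
      intro a _
      rw [← Real.exp_add, loads_snoc, prodMatrix_succ, ← Matrix.vecMul_vecMul, mulVec_avg,
        ← sum_avg, ← Finset.sum_add_distrib]
      congr 1
      apply Finset.sum_congr rfl
      intro u _
      simp only [avg, m]
      ring
    refine (Finset.sum_le_sum (fun ω _ => key ω)).trans ?_
    rw [← Finset.sum_mul]
    refine (mul_le_mul_of_nonneg_right (ih (avg m y)) (by positivity)).trans (le_of_eq ?_)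
    have hc : (Fintype.card (Fin (t + 1) → Fin n → Fin n → Bool) : ℝ)
        = Fintype.card (Fin t → Fin n → Fin n → Bool) * B := by
      rw [Fintype.card_fun (α := Fin (t + 1)), Fintype.card_fun (α := Fin t), ← hB]
      simp only [Fintype.card_fin, pow_succ]
      push_cast; rfl
    rw [hc]
    have he : Real.exp ((∑ u, y u ^ 2) / 4) = Real.exp ((∑ u, avg m y u ^ 2) / 4) *
        Real.exp ((∑ u, y u ^ 2 - ∑ u, avg m y u ^ 2) / 4) := by
      rw [← Real.exp_add]; congr 1; ring
    rw [he]; ring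

theorem card_bound {Ω : Type*} [Fintype Ω] {n : ℕ} (D : Ω → Fin n → ℝ) (r : ℝ) (hr : 0 ≤ r)
    (hD : ∀ y : Fin n → ℝ, ∑ ω, Real.exp (∑ u, D ω u * y u)
      ≤ Fintype.card Ω * Real.exp ((∑ u, y u ^ 2) / 4)) :
    pr (fun ω => ∃ w, r ≤ |D ω w|) ≤ 2 * n * Real.exp (-r ^ 2) := by
  classical
  have hs : ∀ (w : Fin n) (s : ℝ), s ^ 2 = 1 →
      ∑ ω, Real.exp (2 * r * (s * D ω w) - 2 * r ^ 2) ≤ Fintype.card Ω * Real.exp (-r ^ 2) := by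
    intro w s hs
    have h := hD (Pi.single w (2 * r * s))
    have e1 : ∀ ω, ∑ u, D ω u * (Pi.single w (2 * r * s) : Fin n → ℝ) u
        = 2 * r * (s * D ω w) := by
      intro ω
      rw [Finset.sum_eq_single w]
      · simp; ring
      · intro b _ hb; simp [hb]
      · simp
    have e2 : ∑ u, (Pi.single w (2 * r * s) : Fin n → ℝ) u ^ 2 = 4 * r ^ 2 := by
      rw [Finset.sum_eq_single w]
      · simp only [Pi.single_eq_same]; linear_combination 4 * r ^ 2 * hs
      · intro b _ hb; simp [hb]
      · simp
    simp only [e1, e2] at h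
    simp only [Real.exp_sub, ← Finset.sum_div]
    rw [div_le_iff₀ (Real.exp_pos _), mul_assoc, ← Real.exp_add]
    refine h.trans (le_of_eq ?_)
    congr 2; ring
  have hcount : ((Finset.univ.filter (fun ω => ∃ w, r ≤ |D ω w|)).card : ℝ)
      ≤ ∑ ω, ∑ w, (Real.exp (2 * r * (1 * D ω w) - 2 * r ^ 2)
        + Real.exp (2 * r * (-1 * D ω w) - 2 * r ^ 2)) := by
    rw [Finset.card_filter]
    push_cast
    apply Finset.sum_le_sum
    intro ω _
    split_ifs with h
    · obtain ⟨w, hw⟩ := h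
      refine le_trans ?_ (Finset.single_le_sum (f := fun w =>
        (Real.exp (2 * r * (1 * D ω w) - 2 * r ^ 2)
        + Real.exp (2 * r * (-1 * D ω w) - 2 * r ^ 2)))
        (fun i _ => by positivity) (Finset.mem_univ w))
      rcases le_abs.mp hw with h | h
      · have : 1 ≤ Real.exp (2 * r * (1 * D ω w) - 2 * r ^ 2) :=
          Real.one_le_exp (by nlinarith)
        have := Real.exp_pos (2 * r * (-1 * D ω w) - 2 * r ^ 2)
        linarith
      · have : 1 ≤ Real.exp (2 * r * (-1 * D ω w) - 2 * r ^ 2) :=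
          Real.one_le_exp (by nlinarith)
        have := Real.exp_pos (2 * r * (1 * D ω w) - 2 * r ^ 2)
        linarith
    · positivity
  have htot : ((Finset.univ.filter (fun ω => ∃ w, r ≤ |D ω w|)).card : ℝ)
      ≤ 2 * n * Real.exp (-r ^ 2) * Fintype.card Ω := by
    refine hcount.trans ?_
    rw [Finset.sum_comm]
    refine (Finset.sum_le_sum (g := fun _ => 2 * (Fintype.card Ω * Real.exp (-r ^ 2)))
      (fun w _ => ?_)).trans (le_of_eq ?_)
    · rw [Finset.sum_add_distrib]
      have h1 := hs w 1 (by norm_num)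
      have h2 := hs w (-1) (by norm_num)
      linarith
    · simp; ring
  unfold pr
  refine div_le_of_le_mul₀ (Nat.cast_nonneg _) (by positivity) ?_
  refine le_trans (le_of_eq ?_) htot
  congr!

/-- Deviation between the discrete process (independent uniformly
random orientations) and the continuous process with the same matchings:
for any `t` and `δ ≥ 1`,
`P( max_w |x_w^{(t)} - ξ_w^{(t)}| ≥ √(4δ log n) ) ≤ 2 n^{-δ+1}`. -/
theorem stmt9 {n : ℕ} (hn : 2 ≤ n) (M : ℕ → Matching n) (x : Fin n → ℤ)
    (t : ℕ) (δ : ℝ) (hδ : 1 ≤ δ) :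
    pr (fun ω : Fin t → Fin n → Fin n → Bool =>
        ∃ w : Fin n, Real.sqrt (4 * δ * Real.log n) ≤
          |(loads M (lift (orientDefault n) ω) x t w : ℝ) -
            Matrix.vecMul (fun u => (x u : ℝ)) (prodMatrix M 1 t) w|)
      ≤ 2 * (n : ℝ) ^ (-δ + 1) := by
  have hn1 : (1 : ℝ) ≤ n := by exact_mod_cast (by omega : 1 ≤ n)
  have hn0 : (0 : ℝ) < n := by linarith
  have hlog : 0 ≤ Real.log n := Real.log_nonneg hn1
  refine (card_bound (fun (ω : Fin t → Fin n → Fin n → Bool) w =>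
    (loads M (lift (orientDefault n) ω) x t w : ℝ) -
            Matrix.vecMul (fun u => (x u : ℝ)) (prodMatrix M 1 t) w) _ (Real.sqrt_nonneg _)
    (mgf M x (orientDefault n) t)).trans ?_
  rw [Real.sq_sqrt (by positivity), Real.rpow_add hn0, Real.rpow_one, Real.rpow_def_of_pos hn0]
  have : Real.exp (-(4 * δ * Real.log n)) ≤ Real.exp (Real.log n * -δ) := by
    apply Real.exp_le_exp.mpr
    nlinarith [mul_nonneg (by linarith : (0 : ℝ) ≤ δ) hlog]
  nlinarith

end LB
end

section
/- Fix a sequence of matchings and a non-negative integer load vector x^{(t₁)} at the end of round t₁, and run the token process. For any subset of nodes D ⊆ V and any round t₂ > t₁, let Z := Σ_{u∈D} x_u^{(t₂)} be the total number of tokens in D at the end of round t₂. Then for any δ > 0, P( Z ≥ (1+δ)·E[Z] ) ≤ ( e^{δ} / (1+δ)^{1+δ} )^{E[Z]}. -/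
namespace LB


/-- One round of the token process.  For each matched pair `{u,v}` (with `u < v`),
all tokens currently at `u` or `v` are pooled; node `u` receives the `k` tokens of
smallest `π`-rank from the pool, where `k = ⌈pool/2⌉` if the orientation bit
`φ u v` is `true` and `k = ⌊pool/2⌋` otherwise, and `v` receives the rest.
A single uniformly random permutation `π` of all tokens induces an independent,
uniformly random draw (without replacement) inside each pool. -/
def tokenStep {n N : ℕ} (m : Matching n) (φ : Fin n → Fin n → Bool)
    (π : Equiv.Perm (Fin N)) (w : Fin N → Fin n) : Fin N → Fin n := fun i =>
  if m.f (w i) = w i then w i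
  else
    let u : Fin n := if w i < m.f (w i) then w i else m.f (w i)
    let v : Fin n := if w i < m.f (w i) then m.f (w i) else w i
    let P : Finset (Fin N) := Finset.univ.filter fun j => w j = u ∨ w j = v
    let k : ℕ := if φ u v then (P.card + 1) / 2 else P.card / 2
    if (P.filter fun j => π j < π i).card < k then u else v

/-- The token process started at round `t₁` from the placement `w` of the tokens:
`tokensFrom M t₁ R w r i` is the node hosting token `i` after `r` further rounds;
the `(r+1)`-st step uses the matching `M (t₁+r+1)` and the random choices `R (r+1)`
(an orientation bit for every pair together with a random permutation of the tokens). -/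
def tokensFrom {n N : ℕ} (M : ℕ → Matching n) (t₁ : ℕ)
    (R : ℕ → (Fin n → Fin n → Bool) × Equiv.Perm (Fin N)) (w : Fin N → Fin n) :
    ℕ → Fin N → Fin n
  | 0 => w
  | r + 1 => tokenStep (M (t₁ + r + 1)) (R (r + 1)).1 (R (r + 1)).2 (tokensFrom M t₁ R w r)


/-- averaging operator -/
noncomputable def mop {n : ℕ} (m : Matching n) (g : Fin n → ℝ) : Fin n → ℝ :=
  fun u => (g u + g (m.f u)) / 2

noncomputable def bk {n : ℕ} (M : ℕ → Matching n) (t₁ : ℕ) : ℕ → (Fin n → ℝ) → Fin n → ℝ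
  | 0, g => g
  | T + 1, g => bk M t₁ T (mop (M (t₁ + T + 1)) g)

def cnt {n N : ℕ} (w : Fin N → Fin n) (u : Fin n) : ℕ :=
  (Finset.univ.filter fun i => w i = u).card

def newCnt {n : ℕ} (m : Matching n) (φ : Fin n → Fin n → Bool) (x : Fin n → ℕ) (u : Fin n) : ℕ :=
  if m.f u = u then x u
  else if u < m.f u then
    (if φ u (m.f u) then (x u + x (m.f u) + 1) / 2 else (x u + x (m.f u)) / 2)
  else
    (if φ (m.f u) u then (x u + x (m.f u)) / 2 else (x u + x (m.f u) + 1) / 2)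

theorem rank_card {N : ℕ} (π : Equiv.Perm (Fin N)) (P : Finset (Fin N)) (k : ℕ) (hk : k ≤ P.card) :
    (P.filter fun i => (P.filter fun j => π j < π i).card < k).card = k := by
  classical
  set rk : Fin N → ℕ := fun i => (P.filter fun j => π j < π i).card with hrk
  have hmono : ∀ i ∈ P, ∀ i' ∈ P, π i < π i' → rk i < rk i' := by
    intro i hi i' hi' hlt
    apply Finset.card_lt_card
    rw [Finset.ssubset_iff_of_subset]
    · exact ⟨i, by simp [hi, hlt], by simp⟩
    · intro j hj
      simp only [Finset.mem_filter] at hj ⊢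
      exact ⟨hj.1, hj.2.trans hlt⟩
  have hinj : Set.InjOn rk P := by
    intro i hi i' hi' he
    rcases lt_trichotomy (π i) (π i') with h | h | h
    · have := hmono i hi i' hi' h; omega
    · exact π.injective h
    · have := hmono i' hi' i hi h; omega
  have himg : P.image rk = Finset.range P.card := by
    apply Finset.eq_of_subset_of_card_le
    · intro a ha
      simp only [Finset.mem_image] at ha
      obtain ⟨i, hi, rfl⟩ := ha
      rw [Finset.mem_range]
      apply Finset.card_lt_card
      rw [Finset.ssubset_iff_of_subset (Finset.filter_subset _ _)]
      exact ⟨i, hi, by simp⟩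
    · rw [Finset.card_image_of_injOn hinj]; simp
  have h1 : ((P.filter fun i => rk i < k).image rk) = Finset.range k := by
    ext a
    simp only [Finset.mem_image, Finset.mem_filter, Finset.mem_range]
    constructor
    · rintro ⟨i, ⟨_, h⟩, rfl⟩; exact h
    · intro ha
      have : a ∈ P.image rk := by rw [himg, Finset.mem_range]; omega
      simp only [Finset.mem_image] at this
      obtain ⟨i, hi, rfl⟩ := this
      exact ⟨i, ⟨hi, ha⟩, rfl⟩
  have h2 := Finset.card_image_of_injOn (s := P.filter fun i => rk i < k) (f := rk)
    (hinj.mono (by intro i hi; simp at hi; exact hi.1))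
  rw [h1, Finset.card_range] at h2
  exact h2.symm

theorem cnt_pair {n N : ℕ} (w : Fin N → Fin n) (u v : Fin n) (huv : u ≠ v) :
    (Finset.univ.filter fun j => w j = u ∨ w j = v).card = cnt w u + cnt w v := by
  rw [Finset.filter_or, Finset.card_union_of_disjoint]
  · rfl
  · rw [Finset.disjoint_filter]
    intro i _ h1 h2
    exact huv (h1.symm.trans h2)

theorem tokenStep_pair {n N : ℕ} (m : Matching n) (φ : Fin n → Fin n → Bool)
    (π : Equiv.Perm (Fin N)) (w : Fin N → Fin n) (u v : Fin n) (huv : u < v) (hv : m.f u = v)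
    (i : Fin N) (hi : w i = u ∨ w i = v) :
    tokenStep m φ π w i =
      if ((Finset.univ.filter fun j => w j = u ∨ w j = v).filter fun j => π j < π i).card
        < (if φ u v then ((Finset.univ.filter fun j => w j = u ∨ w j = v).card + 1) / 2
            else (Finset.univ.filter fun j => w j = u ∨ w j = v).card / 2) then u else v := by
  have hu : m.f v = u := by rw [← hv, m.invol]
  unfold tokenStep
  rcases hi with h | h
  · simp only [h, hv, huv.ne', huv, if_true, if_false]
  · simp only [h, hu, huv.ne, huv.not_gt, if_false]

theorem tokenStep_or {n N : ℕ} (m : Matching n) (φ : Fin n → Fin n → Bool)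
    (π : Equiv.Perm (Fin N)) (w : Fin N → Fin n) (i : Fin N) :
    tokenStep m φ π w i = w i ∨ tokenStep m φ π w i = m.f (w i) := by
  unfold tokenStep
  dsimp only
  split_ifs <;> simp

theorem cnt_pair_step {n N : ℕ} (m : Matching n) (φ : Fin n → Fin n → Bool)
    (π : Equiv.Perm (Fin N)) (w : Fin N → Fin n) (u v : Fin n) (huv : u < v) (hv : m.f u = v) :
    cnt (tokenStep m φ π w) u =
      (if φ u v then (cnt w u + cnt w v + 1) / 2 else (cnt w u + cnt w v) / 2) ∧
    cnt (tokenStep m φ π w) v =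
      (if φ u v then (cnt w u + cnt w v) / 2 else (cnt w u + cnt w v + 1) / 2) := by
  have hu : m.f v = u := by rw [← hv, m.invol]
  set P := (Finset.univ.filter fun j => w j = u ∨ w j = v) with hP
  have hPc : P.card = cnt w u + cnt w v := cnt_pair w u v huv.ne
  set k : ℕ := (if φ u v then (P.card + 1) / 2 else P.card / 2) with hk
  have hkP : k ≤ P.card := by rw [hk]; split_ifs <;> omega
  have key := rank_card π P k hkP
  have hmem : ∀ i, tokenStep m φ π w i = u ∨ tokenStep m φ π w i = v → i ∈ P := by
    intro i hi
    simp only [hP, Finset.mem_filter, Finset.mem_univ, true_and]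
    rcases tokenStep_or m φ π w i with h | h
    · rw [h] at hi; exact hi
    · rw [h] at hi
      rcases hi with hi | hi
      · right; rw [← m.invol (w i), hi, hv]
      · left; rw [← m.invol (w i), hi, hu]
  have hst : ∀ i ∈ P, tokenStep m φ π w i = if (P.filter fun j => π j < π i).card < k then u else v := by
    intro i hi
    simp only [hP, Finset.mem_filter, Finset.mem_univ, true_and] at hi
    exact tokenStep_pair m φ π w u v huv hv i hi
  have c1 : cnt (tokenStep m φ π w) u = k := by
    rw [← key]
    unfold cnt
    congr 1
    ext i
    simp only [Finset.mem_filter, Finset.mem_univ, true_and]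
    constructor
    · intro h
      have hi := hmem i (Or.inl h)
      refine ⟨hi, ?_⟩
      rw [hst i hi] at h
      by_contra hc
      rw [if_neg hc] at h
      exact huv.ne' h
    · rintro ⟨hi, h⟩
      rw [hst i hi, if_pos h]
  have c2 : cnt (tokenStep m φ π w) u + cnt (tokenStep m φ π w) v = P.card := by
    rw [← cnt_pair _ _ _ huv.ne]
    congr 1
    ext i
    simp only [Finset.mem_filter, Finset.mem_univ, true_and]
    constructor
    · exact hmem i
    · intro hi
      rw [hst i hi]
      split_ifs <;> simp
  rw [c1] at c2
  rw [c1, hk]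
  rw [hk] at c2
  rw [hPc] at c2 ⊢
  refine ⟨rfl, ?_⟩
  split_ifs at c2 ⊢ <;> omega

theorem cnt_step {n N : ℕ} (m : Matching n) (φ : Fin n → Fin n → Bool)
    (π : Equiv.Perm (Fin N)) (w : Fin N → Fin n) (u : Fin n) :
    cnt (tokenStep m φ π w) u = newCnt m φ (cnt w) u := by
  unfold newCnt
  split_ifs with h1 h2 h3 h3
  · unfold cnt
    congr 1
    ext i
    simp only [Finset.mem_filter, Finset.mem_univ, true_and]
    have key : m.f (w i) = u ↔ w i = u := by
      constructor
      · intro h; rw [← m.invol (w i), h, h1]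
      · intro h; rw [h, h1]
    rcases tokenStep_or m φ π w i with h | h <;> rw [h]
    exact key
  · have := (cnt_pair_step m φ π w u _ h2 rfl).1; rw [this, if_pos h3]
  · have := (cnt_pair_step m φ π w u _ h2 rfl).1; rw [this, if_neg h3]
  · have h4 : m.f u < u := lt_of_le_of_ne (not_lt.mp h2) h1
    have := (cnt_pair_step m φ π w _ u h4 (m.invol u)).2; rw [this, if_pos h3, add_comm]
  · have h4 : m.f u < u := lt_of_le_of_ne (not_lt.mp h2) h1
    have := (cnt_pair_step m φ π w _ u h4 (m.invol u)).2
    rw [this, if_neg h3, add_comm (cnt w (m.f u))]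

theorem prod_tok {n N : ℕ} (w : Fin N → Fin n) (h : Fin n → ℝ) :
    ∏ i, h (w i) = ∏ u, h u ^ cnt w u := by
  rw [← Finset.prod_fiberwise_of_maps_to (s := Finset.univ) (t := Finset.univ) (g := w) (by simp)]
  apply Finset.prod_congr rfl
  intro u _
  rw [Finset.prod_congr rfl (g := fun _ => h u), Finset.prod_const]
  · rfl
  · intro i hi
    simp at hi
    rw [hi]

theorem sum_tok {n N : ℕ} (w : Fin N → Fin n) (h : Fin n → ℝ) :
    ∑ i, h (w i) = ∑ u, (cnt w u : ℝ) * h u := by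
  rw [← Finset.sum_fiberwise_of_maps_to (s := Finset.univ) (t := Finset.univ) (g := w) (by simp)]
  apply Finset.sum_congr rfl
  intro u _
  rw [Finset.sum_congr rfl (g := fun _ => h u), Finset.sum_const, nsmul_eq_mul]
  · rfl
  · intro i hi
    simp at hi
    rw [hi]

def invE {n : ℕ} (m : Matching n) : Equiv.Perm (Fin n) := ⟨m.f, m.f, m.invol, m.invol⟩

theorem ex_mono {Ω : Type*} [Fintype Ω] {F G : Ω → ℝ} (h : ∀ ω, F ω ≤ G ω) : ex F ≤ ex G := by
  unfold ex
  gcongr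
  exact h _

theorem ex_prod {A B : Type*} [Fintype A] [Fintype B] (F : A × B → ℝ) :
    ex F = ex (fun a => ex fun b => F (a, b)) := by
  unfold ex
  rw [Fintype.sum_prod_type, Fintype.card_prod, ← Finset.sum_div, div_div, Nat.cast_mul, mul_comm]

theorem ex_const {A : Type*} [Fintype A] [Nonempty A] (c : ℝ) : ex (fun _ : A => c) = c := by
  unfold ex
  have : (Fintype.card A : ℝ) ≠ 0 := by exact_mod_cast Fintype.card_ne_zero
  simp only [Finset.sum_const, Finset.card_univ, nsmul_eq_mul]
  field_simp

theorem ex_equiv {A B : Type*} [Fintype A] [Fintype B] (e : A ≃ B) (F : B → ℝ) :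
    ex (fun a => F (e a)) = ex F := by
  unfold ex
  rw [Equiv.sum_comp e, Fintype.card_congr e]

theorem ex_add {A : Type*} [Fintype A] (F G : A → ℝ) : ex (fun a => F a + G a) = ex F + ex G := by
  unfold ex
  rw [Finset.sum_add_distrib, add_div]

/-- flipping argument -/
theorem ex_flip {A : Type*} [Fintype A] [Nonempty A] (e : A ≃ A) (F : A → ℝ) (c : ℝ)
    (h : ∀ a, F a + F (e a) = 2 * c) : ex F = c := by
  have h1 := ex_add F (fun a => F (e a))
  rw [ex_equiv e F] at h1
  simp only [h] at h1
  rw [ex_const] at h1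
  linarith

def flipE {I : Type*} : (I → Bool) ≃ (I → Bool) := Equiv.piCongrRight fun _ => Equiv.boolNot

theorem newCnt_flip {n : ℕ} (m : Matching n) (φ : Fin n → Fin n → Bool) (x : Fin n → ℕ) (u : Fin n) :
    newCnt m φ x u + newCnt m (fun a b => !(φ a b)) x u = x u + x (m.f u) := by
  unfold newCnt
  by_cases h1 : m.f u = u
  · simp [h1]
  by_cases h2 : u < m.f u
  · cases h3 : φ u (m.f u) <;> simp [h1, h2, h3] <;> omega
  · cases h3 : φ (m.f u) u <;> simp [h1, h2, h3] <;> omega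

abbrev Rnd (n N : ℕ) := (Fin n → Fin n → Bool) × Equiv.Perm (Fin N)

theorem step_sum {n N : ℕ} (m : Matching n) (w : Fin N → Fin n) (g : Fin n → ℝ) :
    ex (fun a : Rnd n N => ∑ i, g (tokenStep m a.1 a.2 w i)) = ∑ i, mop m g (w i) := by
  let e : Rnd n N ≃ Rnd n N :=
    (Equiv.prodCongr (Equiv.piCongrRight fun _ => flipE) (Equiv.refl _))
  apply ex_flip e
  intro a
  rw [sum_tok, sum_tok, sum_tok, ← Finset.sum_add_distrib]
  have : ∀ u, (cnt (tokenStep m a.1 a.2 w) u : ℝ) * g u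
      + (cnt (tokenStep m (e a).1 (e a).2 w) u : ℝ) * g u
      = (cnt w u : ℝ) * g u + (cnt w (m.f u) : ℝ) * g u := by
    intro u
    rw [cnt_step, cnt_step]
    have h := newCnt_flip m a.1 (cnt w) u
    have h2 : (e a).1 = fun x y => !(a.1 x y) := by
      funext x y; simp [e, flipE]
    rw [h2, ← add_mul, ← add_mul]
    congr 1
    exact_mod_cast h
  rw [Finset.sum_congr rfl fun u _ => this u, Finset.sum_add_distrib]
  have h3 : ∑ u, (cnt w (m.f u) : ℝ) * g u = ∑ u, (cnt w u : ℝ) * g (m.f u) := by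
    rw [← Equiv.sum_comp (invE m)]
    apply Finset.sum_congr rfl
    intro u _
    simp [invE, m.invol]
  rw [h3, ← Finset.sum_add_distrib, Finset.mul_sum]
  apply Finset.sum_congr rfl
  intro u _
  unfold mop
  ring

theorem prod_pairs {n : ℕ} (m : Matching n) (G : Fin n → ℝ) :
    ∏ u, G u = ∏ u, (if m.f u = u then G u else if u < m.f u then G u * G (m.f u) else 1) := by
  have h1 : ∀ u, G u = (if m.f u = u then G u else 1) * (if u < m.f u then G u else 1)
      * (if m.f u < u then G u else 1) := by
    intro u
    rcases lt_trichotomy u (m.f u) with h | h | h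
    · simp [h, h.ne', h.not_gt]
    · simp [← h]
    · simp [h, h.ne, h.not_gt]
  have h2 : ∏ u, (if m.f u < u then G u else 1) = ∏ u, (if u < m.f u then G (m.f u) else 1) := by
    rw [← Equiv.prod_comp (invE m)]
    apply Finset.prod_congr rfl
    intro u _
    simp [invE, m.invol]
  rw [Finset.prod_congr rfl fun u _ => h1 u, Finset.prod_mul_distrib, h2, ← Finset.prod_mul_distrib]
  apply Finset.prod_congr rfl
  intro u _
  rcases lt_trichotomy u (m.f u) with h | h | h
  · simp [h, h.ne']
  · simp [← h]
  · simp [h.ne, h.not_gt]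

theorem ex_pi_prod {I A : Type*} [Fintype I] [DecidableEq I] [Fintype A] (F : I → A → ℝ) :
    ex (fun φ : I → A => ∏ u, F u (φ u)) = ∏ u, ex (F u) := by
  unfold ex
  rw [Finset.prod_div_distrib, Finset.prod_univ_sum, Fintype.piFinset_univ]
  simp

theorem ex_bit {I : Type*} [Fintype I] [DecidableEq I] (v : I) (F : Bool → ℝ) :
    ex (fun ψ : I → Bool => F (ψ v)) = (F true + F false) / 2 := by
  apply ex_flip flipE
  intro a
  simp only [flipE, Equiv.piCongrRight_apply, Pi.map_apply, Equiv.boolNot_apply]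
  cases a v <;> simp <;> ring

theorem amgm_pool (a b : ℝ) (ha : 0 ≤ a) (hb : 0 ≤ b) (y : ℕ) :
    (a ^ ((y + 1) / 2) * b ^ (y / 2) + a ^ (y / 2) * b ^ ((y + 1) / 2)) / 2 ≤ ((a + b) / 2) ^ y := by
  have h0 : a * b ≤ ((a + b) / 2) ^ 2 := by nlinarith [sq_nonneg (a - b)]
  rcases Nat.even_or_odd' y with ⟨q, rfl | rfl⟩
  · have e1 : (2 * q + 1) / 2 = q := by omega
    have e2 : (2 * q) / 2 = q := by omega
    rw [e1, e2, pow_mul]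
    calc _ = (a * b) ^ q := by rw [mul_pow]; ring
      _ ≤ _ := pow_le_pow_left₀ (mul_nonneg ha hb) h0 q
  · have e1 : (2 * q + 1 + 1) / 2 = q + 1 := by omega
    have e2 : (2 * q + 1) / 2 = q := by omega
    rw [e1, e2, pow_succ _ (2 * q), pow_mul]
    calc _ = (a * b) ^ q * ((a + b) / 2) := by rw [mul_pow]; ring
      _ ≤ _ := by
        apply mul_le_mul_of_nonneg_right (pow_le_pow_left₀ (mul_nonneg ha hb) h0 q)
        positivity

theorem step_prod {n N : ℕ} (m : Matching n) (w : Fin N → Fin n) (h : Fin n → ℝ)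
    (hh : ∀ u, 0 ≤ h u) :
    ex (fun a : Rnd n N => ∏ i, h (tokenStep m a.1 a.2 w i)) ≤ ∏ i, mop m h (w i) := by
  let x := cnt w
  let F : Fin n → (Fin n → Bool) → ℝ := fun u ψ =>
    if m.f u = u then h u ^ x u else if u < m.f u then
      (fun b : Bool => if b then h u ^ ((x u + x (m.f u) + 1) / 2) * h (m.f u) ^ ((x u + x (m.f u)) / 2)
        else h u ^ ((x u + x (m.f u)) / 2) * h (m.f u) ^ ((x u + x (m.f u) + 1) / 2)) (ψ (m.f u))
      else 1
  have h1 : ∀ a : Rnd n N, ∏ i, h (tokenStep m a.1 a.2 w i) = ∏ u, F u (a.1 u) := by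
    intro a
    rw [prod_tok, prod_pairs m]
    apply Finset.prod_congr rfl
    intro u _
    simp only [F]
    rw [cnt_step, cnt_step]
    split_ifs with c1 c2 c3
    · simp [newCnt, c1, x]
    · simp [newCnt, m.invol, c2, c2.ne, c2.ne', c2.not_gt, c3, x, add_comm (cnt w (m.f u))]
    · simp [newCnt, m.invol, c2, c2.ne, c2.ne', c2.not_gt, c3, x, add_comm (cnt w (m.f u))]
    · rfl
  simp only [h1]
  rw [ex_prod]
  simp only [ex_const]
  rw [ex_pi_prod, prod_tok, prod_pairs m (fun u => mop m h u ^ cnt w u)]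
  apply Finset.prod_le_prod
  · intro u _
    unfold ex
    apply div_nonneg _ (by positivity)
    apply Finset.sum_nonneg
    intro ψ _
    have ha := hh u
    have hb := hh (m.f u)
    simp only [F]
    split_ifs <;> positivity
  · intro u _
    simp only [F]
    split_ifs with c1 c2
    · rw [ex_const]
      simp [mop, c1, x]
    · rw [ex_bit (m.f u) (fun b : Bool => if b then h u ^ ((x u + x (m.f u) + 1) / 2) * h (m.f u) ^ ((x u + x (m.f u)) / 2)
        else h u ^ ((x u + x (m.f u)) / 2) * h (m.f u) ^ ((x u + x (m.f u) + 1) / 2))]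
      have := amgm_pool (h u) (h (m.f u)) (hh _) (hh _) (x u + x (m.f u))
      simp only [if_true, Bool.false_eq_true, if_false]
      refine this.trans (le_of_eq ?_)
      unfold mop
      rw [m.invol, add_comm (h (m.f u)), pow_add]
    · rw [ex_const]

theorem tokensFrom_congr {n N : ℕ} (M : ℕ → Matching n) (t₁ : ℕ) (R R' : ℕ → Rnd n N)
    (w : Fin N → Fin n) (r : ℕ) (h : ∀ s, 1 ≤ s → s ≤ r → R s = R' s) :
    tokensFrom M t₁ R w r = tokensFrom M t₁ R' w r := by
  induction r with
  | zero => rfl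
  | succ r ih =>
    simp only [tokensFrom]
    rw [ih fun s h1 h2 => h s h1 (by omega), h (r + 1) (by omega) le_rfl]

theorem tokens_snoc {n N : ℕ} (M : ℕ → Matching n) (t₁ : ℕ) (a₀ : Rnd n N)
    (w : Fin N → Fin n) (T : ℕ) (ω : Fin T → Rnd n N) (a : Rnd n N) :
    tokensFrom M t₁ (lift a₀ (Fin.snoc ω a : Fin (T + 1) → Rnd n N)) w (T + 1) =
      tokenStep (M (t₁ + T + 1)) a.1 a.2 (tokensFrom M t₁ (lift a₀ ω) w T) := by
  simp only [tokensFrom]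
  rw [tokensFrom_congr M t₁ _ (lift a₀ ω) w T]
  · have : lift a₀ (Fin.snoc ω a : Fin (T + 1) → Rnd n N) (T + 1) = a := by
      unfold lift
      simp [Fin.snoc]
    rw [this]
  · intro s h1 h2
    unfold lift
    have h3 : s - 1 < T := by omega
    have h4 : s - 1 < T + 1 := by omega
    simp [Fin.snoc, h3, h4]

theorem ex_snoc {A : Type*} [Fintype A] (T : ℕ) (F : (Fin (T + 1) → A) → ℝ) :
    ex F = ex (fun ω : Fin T → A => ex fun a : A => F (Fin.snoc ω a : Fin (T + 1) → A)) := by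
  rw [← ex_prod (fun p : (Fin T → A) × A => F (Fin.snoc p.1 p.2 : Fin (T + 1) → A)),
    ← ex_equiv ((Equiv.prodComm _ _).trans (Fin.snocEquiv fun _ : Fin (T + 1) => A)) F]
  rfl

theorem proc_sum {n N : ℕ} (M : ℕ → Matching n) (t₁ : ℕ) (a₀ : Rnd n N)
    (w : Fin N → Fin n) (T : ℕ) (g : Fin n → ℝ) :
    ex (fun ω : Fin T → Rnd n N => ∑ i, g (tokensFrom M t₁ (lift a₀ ω) w T i))
      = ∑ i, bk M t₁ T g (w i) := by
  induction T generalizing g with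
  | zero => simp only [tokensFrom, bk]; rw [ex_const]
  | succ T ih =>
    rw [ex_snoc]
    simp only [tokens_snoc, step_sum]
    rw [ih]; rfl

theorem proc_prod {n N : ℕ} (M : ℕ → Matching n) (t₁ : ℕ) (a₀ : Rnd n N)
    (w : Fin N → Fin n) (T : ℕ) (g : Fin n → ℝ) (hg : ∀ u, 0 ≤ g u) :
    ex (fun ω : Fin T → Rnd n N => ∏ i, g (tokensFrom M t₁ (lift a₀ ω) w T i))
      ≤ ∏ i, bk M t₁ T g (w i) := by
  induction T generalizing g with
  | zero => simp only [tokensFrom, bk]; rw [ex_const]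
  | succ T ih =>
    rw [ex_snoc]
    simp only [tokens_snoc]
    refine (ex_mono fun ω => step_prod _ _ g hg).trans ?_
    exact ih _ fun u => div_nonneg (add_nonneg (hg _) (hg _)) (by norm_num)

theorem bk_affine {n : ℕ} (M : ℕ → Matching n) (t₁ : ℕ) (T : ℕ) (g : Fin n → ℝ) (c : ℝ) :
    bk M t₁ T (fun u => 1 + c * g u) = fun u => 1 + c * bk M t₁ T g u := by
  induction T generalizing g with
  | zero => rfl
  | succ T ih =>
    simp only [bk]
    rw [← ih]
    congr 1
    funext u
    simp only [mop]
    ring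

theorem bk_nonneg {n : ℕ} (M : ℕ → Matching n) (t₁ : ℕ) (T : ℕ) (g : Fin n → ℝ)
    (hg : ∀ u, 0 ≤ g u) (u : Fin n) : 0 ≤ bk M t₁ T g u := by
  induction T generalizing g with
  | zero => exact hg u
  | succ T ih =>
    exact ih _ fun u => div_nonneg (add_nonneg (hg _) (hg _)) (by norm_num)

theorem pr_markov {Ω : Type*} [Fintype Ω] (A : Ω → Prop) (F : Ω → ℝ) (c : ℝ)
    (hF : ∀ ω, 0 ≤ F ω) (h : ∀ ω, A ω → c ≤ F ω) : c * pr A ≤ ex F := by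
  classical
  unfold pr ex
  rw [← mul_div_assoc]
  gcongr
  calc _ = ∑ ω ∈ Finset.univ.filter A, c := by
        rw [Finset.sum_const, nsmul_eq_mul, mul_comm]
    _ ≤ ∑ ω ∈ Finset.univ.filter A, F ω :=
        Finset.sum_le_sum fun ω hω => h ω (Finset.mem_filter.mp hω).2
    _ ≤ _ := Finset.sum_le_sum_of_subset_of_nonneg (Finset.filter_subset _ _) fun ω _ _ => hF ω

/-- Chernoff bound for the number of tokens ending up in a set
`D` of nodes:  with `Z = ∑_{u∈D} x_u^{(t₂)}`, for any `δ > 0`,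
`P(Z ≥ (1+δ) E Z) ≤ (e^δ/(1+δ)^{1+δ})^{E Z}`. -/
theorem stmt13 {n N : ℕ} (hn : 0 < n) (M : ℕ → Matching n) (t₁ t₂ : ℕ)
    (h : t₁ < t₂) (w0 : Fin N → Fin n) (D : Finset (Fin n)) :
    ∀ Z : (Fin (t₂ - t₁) → (Fin n → Fin n → Bool) × Equiv.Perm (Fin N)) → ℝ,
      (Z = fun ω => ∑ u ∈ D,
          ((Finset.univ.filter fun i : Fin N =>
            tokensFrom M t₁ (lift (orientDefault n, Equiv.refl (Fin N)) ω) w0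
              (t₂ - t₁) i = u).card : ℝ)) →
      ∀ δ : ℝ, 0 < δ →
        pr (fun ω => (1 + δ) * ex Z ≤ Z ω)
          ≤ (Real.exp δ / (1 + δ) ^ (1 + δ)) ^ (ex Z) := by
  intro Z hZ δ hδ
  generalize t₂ - t₁ = T at Z hZ
  set a₀ : Rnd n N := (orientDefault n, Equiv.refl (Fin N)) with ha₀
  set g : Fin n → ℝ := fun u => if u ∈ D then 1 else 0 with hgdef
  have hg : ∀ u, 0 ≤ g u := fun u => by simp only [hgdef]; split_ifs <;> norm_num
  have hZ' : Z = fun ω => ∑ i, g (tokensFrom M t₁ (lift a₀ ω) w0 T i) := by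
    rw [hZ]
    funext ω
    rw [sum_tok]
    simp [hgdef, cnt]
  have hd : (0 : ℝ) < 1 + δ := by linarith
  have hEZ : ex Z = ∑ i, bk M t₁ T g (w0 i) := by
    rw [hZ']; exact proc_sum M t₁ a₀ w0 T g
  have hpow : ∀ ω, (1 + δ) ^ (Z ω) = ∏ i, (fun u => 1 + δ * g u) (tokensFrom M t₁ (lift a₀ ω) w0 T i) := by
    intro ω
    rw [hZ']
    dsimp only
    rw [Real.rpow_sum_of_pos hd]
    apply Finset.prod_congr rfl
    intro i _
    simp only [hgdef]
    split_ifs <;> simp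
  have hmgf : ex (fun ω => (1 + δ) ^ (Z ω)) ≤ Real.exp (δ * ex Z) := by
    simp only [hpow]
    refine (proc_prod M t₁ a₀ w0 T (fun u => 1 + δ * g u) ?_).trans ?_
    · intro u
      have := hg u
      positivity
    · rw [bk_affine, hEZ, Finset.mul_sum, Real.exp_sum]
      apply Finset.prod_le_prod
      · intro i _
        have := bk_nonneg M t₁ T g hg (w0 i)
        positivity
      · intro i _
        have := Real.add_one_le_exp (δ * bk M t₁ T g (w0 i))
        linarith
  have hmk := pr_markov (fun ω => (1 + δ) * ex Z ≤ Z ω) (fun ω => (1 + δ) ^ (Z ω))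
    ((1 + δ) ^ ((1 + δ) * ex Z)) (fun ω => (Real.rpow_pos_of_pos hd _).le)
    (fun ω hω => Real.rpow_le_rpow_of_exponent_le (by linarith) hω)
  rw [Real.div_rpow (Real.exp_pos _).le (Real.rpow_pos_of_pos hd _).le, ← Real.rpow_mul hd.le,
    ← Real.exp_mul, le_div_iff₀ (Real.rpow_pos_of_pos hd _), mul_comm]
  exact hmk.trans hmgf

end LB
end
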